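/- Let C_n = {v ∈ S_{2n} : v(2n+1-i) = 2n+1-v(i) for all i}, regarded as a Coxeter group with simple generators c_0 = s_n (transposing n and n+1) and c_i = s_{n-i}s_{n+i} for 1 ≤ i ≤ n-1, and let ℓ_C denote word length with respect to {c_0,...,c_{n-1}}. Let v_□ ∈ C_n be the permutation with v_□(i) = n+1-i for i ≤ n and v_□(i) = 3n+1-i for i > n. Then for v ∈ C_n, there exist u_l, u_r ∈ C_n with v = u_l · v_□ · u_r and ℓ_C(v) = ℓ_C(u_l) + ℓ_C(v_□) + ℓ_C(u_r) if and only if v is 123-avoiding as an element of S_{2n}. -/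

import Mathlib

/-!
Let reversal `rev` act on pairs of positions. A length on `C_n` with `2 ℓ(u) = ∑ |Stab(p)|`, summed
over the inversions `p` of `u`, counts orbits of inversions; it drops by one along every descent, so
it is `ℓ_C`. The weight `|Stab|` is `C_n`-invariant, hence `ℓ_C (u w) = ℓ_C u + ℓ_C w` exactly when
the inversions of `w` are all inversions of `u w`.

For `v = u_l v_□ u_r` the two resulting conditions read: `u_r` only inverts pairs `i < j` that it
sends to different halves, and `v` only keeps in order those pairs `i < j` that `u_r` sends to the
left and right half respectively. Such a `u_r` is the shuffle of a set `A` of positions, containing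
one of `i` and `rev i` for each `i`, such that the lower end of each ascending pair of `v` lies in
`A` and the upper end does not. Such an `A` exists if and only if no position is both a lower and an
upper end, that is, if and only if `v` avoids 123.
-/

namespace TypeC

open Equiv
open scoped symmDiff

section WordLength

variable {G : Type*} [Monoid G] {S : Set G} {L : G → ℕ} {k : ℕ}

/-- The least length of a word in the elements of `S` with product `g`; it is `0` when there is no
such word. -/
noncomputable def wordLength (S : Set G) (g : G) : ℕ :=
  sInf {m | ∃ l : List G, l.length = m ∧ (∀ x ∈ l, x ∈ S) ∧ l.prod = g}

theorem apply_list_prod_le (h_one : L 1 = 0) (h_mul : ∀ g, ∀ s ∈ S, L (g * s) ≤ L g + k)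
    (l : List G) (hl : ∀ x ∈ l, x ∈ S) : L l.prod ≤ k * l.length := by
  induction l using List.reverseRecOn with
  | nil => simp [h_one]
  | append_singleton l s ih =>
    have h_init : L l.prod ≤ k * l.length := ih fun x hx => hl x (by simp [hx])
    have h_last : L (l.prod * s) ≤ L l.prod + k := h_mul _ s (hl s (by simp))
    simp only [List.prod_append, List.prod_singleton, List.length_append, List.length_singleton]
    linarith

theorem exists_list_prod_eq {H : Set G} (hk : 0 < k) (h_one : L 1 = 0)
    (h_desc : ∀ g ∈ H, g ≠ 1 → ∃ h ∈ H, ∃ s ∈ S, h * s = g ∧ L g = L h + k) {g : G} (hg : g ∈ H) :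
    ∃ l : List G, (∀ x ∈ l, x ∈ S) ∧ l.prod = g ∧ k * l.length = L g := by
  induction hm : L g using Nat.strong_induction_on generalizing g with
  | _ m ih =>
    rcases eq_or_ne g 1 with rfl | h_ne
    · exact ⟨[], by simp, by simp, by simp [← hm, h_one]⟩
    obtain ⟨h, hh, s, hs, rfl, h_len⟩ := h_desc g hg h_ne
    obtain ⟨l, hl, rfl, h_eq⟩ := ih (L h) (by omega) hh rfl
    refine ⟨l ++ [s], ?_, by simp, ?_⟩
    · simpa [or_imp, forall_and] using ⟨hl, hs⟩
    · rw [List.length_append, List.length_singleton, mul_add, mul_one, h_eq, ← h_len, hm]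

theorem mul_wordLength_eq {H : Set G} (hk : 0 < k) (h_one : L 1 = 0)
    (h_mul : ∀ g, ∀ s ∈ S, L (g * s) ≤ L g + k)
    (h_desc : ∀ g ∈ H, g ≠ 1 → ∃ h ∈ H, ∃ s ∈ S, h * s = g ∧ L g = L h + k) {g : G} (hg : g ∈ H) :
    k * wordLength S g = L g := by
  obtain ⟨l, hl, h_prod, h_len⟩ := exists_list_prod_eq hk h_one h_desc hg
  have h_word : l.length ∈ {m | ∃ l : List G, l.length = m ∧ (∀ x ∈ l, x ∈ S) ∧ l.prod = g} :=
    ⟨l, rfl, hl, h_prod⟩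
  apply le_antisymm
  · rw [← h_len]
    exact Nat.mul_le_mul_left k (Nat.sInf_le h_word)
  · obtain ⟨l', h_len', hl', h_prod'⟩ := Nat.sInf_mem ⟨_, h_word⟩
    rw [wordLength, ← h_len', ← h_prod']
    exact apply_list_prod_le h_one h_mul l' hl'

end WordLength

section Inversions

variable {α : Type*} [Fintype α] [LinearOrder α]

/-- The inversions of `u`, as pairs of positions in increasing order. -/
def inversions (u : Perm α) : Finset (α × α) :=
  {p | p.1 < p.2 ∧ u p.2 < u p.1}

@[simp]
theorem mem_inversions {u : Perm α} {p : α × α} :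
    p ∈ inversions u ↔ p.1 < p.2 ∧ u p.2 < u p.1 := by
  simp [inversions]

theorem lt_of_notMem_inversions {u : Perm α} {i j : α} (hij : i < j)
    (h : (i, j) ∉ inversions u) : u i < u j :=
  (not_lt.1 fun h_inv => h (mem_inversions.2 ⟨hij, h_inv⟩)).lt_of_ne (u.injective.ne hij.ne)

/-- The number of inversions of `u`, each counted with the weight of its pair of positions. -/
def inversionWeight (wt : Sym2 α → ℕ) (u : Perm α) : ℕ :=
  ∑ p ∈ inversions u, wt s(p.1, p.2)

theorem inversionWeight_one (wt : Sym2 α → ℕ) : inversionWeight wt 1 = 0 := by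
  refine Finset.sum_eq_zero fun p hp => ?_
  obtain ⟨h_lt, h_gt⟩ := mem_inversions.1 hp
  exact absurd h_gt h_lt.asymm

variable {wt : Sym2 α → ℕ} {u w : Perm α}

theorem mem_symmDiff_inversions {p : α × α} :
    p ∈ inversions w ∆ inversions (u * w) ↔
      p.1 < p.2 ∧ (w p.1 < w p.2 ↔ u (w p.2) < u (w p.1)) := by
  have hw := w.injective.ne_iff (x := p.1) (y := p.2)
  have hu := u.injective.ne_iff (x := w p.1) (y := w p.2)
  simp only [Finset.mem_symmDiff, mem_inversions, Perm.mul_apply]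
  grind

/- Up to order, `w` maps the pairs in the symmetric difference bijectively to the inversions of
`u`. -/
theorem sum_symmDiff_inversions (hw : ∀ z, wt (z.map w) = wt z) :
    ∑ p ∈ inversions w ∆ inversions (u * w), wt s(p.1, p.2) = inversionWeight wt u := by
  let image (e : Perm α) (p : α × α) : α × α :=
    if e p.1 < e p.2 then (e p.1, e p.2) else (e p.2, e p.1)
  have h_inj (e : Perm α) {a b : α} : e a = e b ↔ a = b := e.injective.eq_iff
  refine Finset.sum_nbij' (image w) (image w.symm) ?_ ?_ ?_ ?_ ?_
  · rintro ⟨a, b⟩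
    grind [mem_symmDiff_inversions, mem_inversions]
  · rintro ⟨a, b⟩
    grind [mem_symmDiff_inversions, mem_inversions]
  · rintro ⟨a, b⟩
    grind [mem_symmDiff_inversions]
  · rintro ⟨a, b⟩
    grind [mem_inversions]
  · rintro ⟨a, b⟩ -
    rw [← hw]
    grind [Sym2.eq_swap, Sym2.map_mk]

theorem inversionWeight_mul_add (hw : ∀ z, wt (z.map w) = wt z) :
    inversionWeight wt (u * w) + 2 * ∑ p ∈ inversions w \ inversions (u * w), wt s(p.1, p.2) =
      inversionWeight wt u + inversionWeight wt w := by
  have h_diff := sum_symmDiff_inversions (u := u) hw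
  rw [Finset.symmDiff_def, Finset.sum_union disjoint_sdiff_sdiff] at h_diff
  have h_mul := Finset.sum_inter_add_sum_sdiff (inversions (u * w)) (inversions w)
    fun p => wt s(p.1, p.2)
  have h_right := Finset.sum_inter_add_sum_sdiff (inversions w) (inversions (u * w))
    fun p => wt s(p.1, p.2)
  rw [Finset.inter_comm] at h_right
  unfold inversionWeight at *
  omega

theorem inversionWeight_mul_le (hw : ∀ z, wt (z.map w) = wt z) :
    inversionWeight wt (u * w) ≤ inversionWeight wt u + inversionWeight wt w :=
  (Nat.le_add_right _ _).trans (inversionWeight_mul_add hw).le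

theorem inversionWeight_mul_eq_iff (h_pos : ∀ z, 0 < wt z) (hw : ∀ z, wt (z.map w) = wt z) :
    inversionWeight wt (u * w) = inversionWeight wt u + inversionWeight wt w ↔
      inversions w ⊆ inversions (u * w) := by
  rw [← inversionWeight_mul_add hw, left_eq_add, mul_eq_zero_iff_left two_ne_zero,
    Finset.sum_eq_zero_iff, ← Finset.sdiff_eq_empty_iff_subset, Finset.eq_empty_iff_forall_notMem]
  exact forall₂_congr fun p _ => iff_of_eq (eq_false (h_pos _).ne')

theorem inversionWeight_mul_mul_eq_iff (h_pos : ∀ z, 0 < wt z) {x y z : Perm α}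
    (hy : ∀ p, wt (p.map y) = wt p) (hz : ∀ p, wt (p.map z) = wt p) :
    inversionWeight wt (x * y * z) =
        inversionWeight wt x + inversionWeight wt y + inversionWeight wt z ↔
      inversions z ⊆ inversions (y * z) ∧ inversions (y * z) ⊆ inversions (x * y * z) := by
  have hyz (p : Sym2 α) : wt (p.map (y * z)) = wt p := by
    rw [Perm.coe_mul, ← Sym2.map_map, hy, hz]
  have h_left := inversionWeight_mul_le (u := x) hyz
  have h_right := inversionWeight_mul_le (u := y) hz
  rw [← inversionWeight_mul_eq_iff h_pos hz, mul_assoc, ← inversionWeight_mul_eq_iff h_pos hyz]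
  omega

end Inversions

theorem exists_covBy_lt_of_ne_one {α : Type*} [Finite α] [LinearOrder α] [LocallyFiniteOrder α]
    {u : Perm α} (hu : u ≠ 1) : ∃ a b, a ⋖ b ∧ u b < u a := by
  by_contra! h
  have h_mono : StrictMono u := (strictMono_iff_forall_covBy u).2 fun a b hab =>
    (h a b hab).lt_of_ne (u.injective.ne hab.lt.ne)
  have h_refl : h_mono.orderIsoOfSurjective u u.surjective = OrderIso.refl α :=
    Subsingleton.elim _ _
  exact hu (Perm.ext fun a => DFunLike.congr_fun h_refl a)

section Hyperoctahedral

variable {N : ℕ}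

/-- The group of permutations `u` of `Fin N` with `u (rev i) = rev (u i)`. For `N = 2 * n` it is the
type-C Weyl group `C_n`, with the points numbered from `0`. -/
def hyperoctahedralGroup (N : ℕ) : Subgroup (Perm (Fin N)) :=
  Subgroup.centralizer {Fin.revPerm}

theorem mem_hyperoctahedralGroup {u : Perm (Fin N)} :
    u ∈ hyperoctahedralGroup N ↔ ∀ i, u (Fin.rev i) = Fin.rev (u i) := by
  rw [hyperoctahedralGroup, Subgroup.mem_centralizer_singleton_iff, Perm.ext_iff]
  rfl

/-- The order of the stabilizer of a pair in the group of order two generated by the reversal of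
`Fin N`. With this weight every orbit of pairs contributes two to a sum. -/
def stabilizerWeight (z : Sym2 (Fin N)) : ℕ :=
  if z.map Fin.rev = z then 2 else 1

theorem stabilizerWeight_pos (z : Sym2 (Fin N)) : 0 < stabilizerWeight z := by
  unfold stabilizerWeight
  split <;> norm_num

theorem stabilizerWeight_map {w : Perm (Fin N)} (hw : w ∈ hyperoctahedralGroup N)
    (z : Sym2 (Fin N)) : stabilizerWeight (z.map w) = stabilizerWeight z := by
  have h_comm : (z.map w).map Fin.rev = (z.map Fin.rev).map w := by
    rw [Sym2.map_map, Sym2.map_map]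
    exact Sym2.map_congr fun i _ => (mem_hyperoctahedralGroup.1 hw i).symm
  simp only [stabilizerWeight, h_comm, (Sym2.map.injective w.injective).eq_iff]

theorem rev_mem_inversions {u : Perm (Fin N)} (hu : u ∈ hyperoctahedralGroup N) {a b : Fin N}
    (h : (a, b) ∈ inversions u) : (b.rev, a.rev) ∈ inversions u := by
  simpa [mem_hyperoctahedralGroup.1 hu] using h

theorem sum_stabilizerWeight_orbit {a b : Fin N} (hab : a ≠ b) :
    ∑ p ∈ {(a, b), (b.rev, a.rev)}, stabilizerWeight s(p.1, p.2) = 2 := by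
  by_cases h_rev : a.rev = b
  · subst h_rev
    simp [stabilizerWeight]
  · have h_rev' : a ≠ b.rev := fun h => h_rev (by rw [h, Fin.rev_rev])
    rw [Finset.sum_pair (by simp [h_rev'])]
    have h_fixed : ¬(a.rev = a ∧ b.rev = b) := by
      simp only [Fin.ext_iff, Fin.val_rev] at hab ⊢
      omega
    simp only [stabilizerWeight, Sym2.map_mk, Sym2.eq_iff, Fin.rev_rev]
    grind

end Hyperoctahedral

section Generators

variable {n : ℕ}

/-- The simple generator `c_i` of `C_n`. -/
def simpleGen (i : Fin n) : Perm (Fin (2 * n)) :=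
  if (i : ℕ) = 0 then swap ⟨n - i - 1, by omega⟩ ⟨n - i, by omega⟩
  else
    swap ⟨n - i - 1, by omega⟩ ⟨n - i, by omega⟩ * swap ⟨n + i - 1, by omega⟩ ⟨n + i, by omega⟩

theorem val_simpleGen_apply (i : Fin n) (x : Fin (2 * n)) :
    (simpleGen i x : ℕ) =
      if (x : ℕ) = n - i - 1 then n - i else if (x : ℕ) = n - i then n - i - 1 else
      if (x : ℕ) = n + i - 1 then n + i else if (x : ℕ) = n + i then n + i - 1 else x := by
  unfold simpleGen
  split_ifs with hi <;>
    simp only [Perm.mul_apply, swap_apply_def, Fin.ext_iff, apply_ite Fin.val] <;>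
    split_ifs <;> omega

theorem simpleGen_mem (i : Fin n) : simpleGen i ∈ hyperoctahedralGroup (2 * n) := by
  refine mem_hyperoctahedralGroup.2 fun x => Fin.ext ?_
  simp only [Fin.val_rev, val_simpleGen_apply]
  split_ifs <;> omega

theorem simpleGen_mul_self (i : Fin n) : simpleGen i * simpleGen i = 1 := by
  ext x
  simp only [Perm.mul_apply, val_simpleGen_apply, Perm.one_apply]
  split_ifs <;> omega

/-- The left one of the two mirror-image inversions of `c_i`; they coincide for `i = 0`. -/
def simpleInversion (i : Fin n) : Fin (2 * n) × Fin (2 * n) :=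
  (⟨n - i - 1, by omega⟩, ⟨n - i, by omega⟩)

theorem inversions_simpleGen (i : Fin n) :
    inversions (simpleGen i) =
      {simpleInversion i, ((simpleInversion i).2.rev, (simpleInversion i).1.rev)} := by
  ext ⟨a, b⟩
  simp only [simpleInversion, mem_inversions, Fin.lt_def, val_simpleGen_apply, Finset.mem_insert,
    Finset.mem_singleton, Prod.mk.injEq, Fin.ext_iff, Fin.val_rev]
  split_ifs <;> omega

theorem inversionWeight_simpleGen (i : Fin n) :
    inversionWeight stabilizerWeight (simpleGen i) = 2 := by
  rw [inversionWeight, inversions_simpleGen]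
  exact sum_stabilizerWeight_orbit (Fin.ne_of_val_ne (show n - i - 1 ≠ n - i by omega))

theorem exists_simpleInversion_mem_inversions {u : Perm (Fin (2 * n))}
    (hu : u ∈ hyperoctahedralGroup (2 * n)) (h_ne : u ≠ 1) :
    ∃ i : Fin n, simpleInversion i ∈ inversions u := by
  obtain ⟨a, b, h_cov, h_lt⟩ := exists_covBy_lt_of_ne_one h_ne
  have h_inv : (a, b) ∈ inversions u := mem_inversions.2 ⟨h_cov.lt, h_lt⟩
  have h_succ : (a : ℕ) + 1 = b := by simpa using h_cov
  rcases lt_or_ge (a : ℕ) n with ha | ha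
  · have h_eq : simpleInversion ⟨n - 1 - a, by omega⟩ = (a, b) := by
      simp only [simpleInversion, Prod.mk.injEq, Fin.ext_iff]
      omega
    exact ⟨_, h_eq ▸ h_inv⟩
  · have h_eq : simpleInversion ⟨a + 1 - n, by omega⟩ = (b.rev, a.rev) := by
      simp only [simpleInversion, Prod.mk.injEq, Fin.ext_iff, Fin.val_rev]
      omega
    exact ⟨_, h_eq ▸ rev_mem_inversions hu h_inv⟩

theorem exists_inversionWeight_eq_add_two {u : Perm (Fin (2 * n))}
    (hu : u ∈ hyperoctahedralGroup (2 * n)) (h_ne : u ≠ 1) :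
    ∃ i : Fin n, inversionWeight stabilizerWeight u =
      inversionWeight stabilizerWeight (u * simpleGen i) + 2 := by
  obtain ⟨i, hi⟩ := exists_simpleInversion_mem_inversions hu h_ne
  have h_cancel : u * simpleGen i * simpleGen i = u := by
    rw [mul_assoc, simpleGen_mul_self, mul_one]
  have h_subset : inversions (simpleGen i) ⊆ inversions (u * simpleGen i * simpleGen i) := by
    rw [h_cancel, inversions_simpleGen]
    exact Finset.insert_subset hi (Finset.singleton_subset_iff.2 (rev_mem_inversions hu hi))
  have h_add := (inversionWeight_mul_eq_iff stabilizerWeight_pos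
    (stabilizerWeight_map (simpleGen_mem i))).2 h_subset
  rw [h_cancel] at h_add
  exact ⟨i, h_add.trans (congrArg _ (inversionWeight_simpleGen i))⟩

/-- The type-C length `ℓ_C`. -/
noncomputable def length (u : Perm (Fin (2 * n))) : ℕ :=
  wordLength (Set.range simpleGen) u

theorem two_mul_length {u : Perm (Fin (2 * n))}
    (hu : u ∈ hyperoctahedralGroup (2 * n)) :
    2 * length u = inversionWeight stabilizerWeight u := by
  refine mul_wordLength_eq two_pos (inversionWeight_one _) ?_ ?_ (SetLike.mem_coe.2 hu)
  · rintro g _ ⟨i, rfl⟩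
    exact (inversionWeight_mul_le (stabilizerWeight_map (simpleGen_mem i))).trans_eq
      (congrArg _ (inversionWeight_simpleGen i))
  · intro g hg h_ne
    obtain ⟨i, hi⟩ := exists_inversionWeight_eq_add_two hg h_ne
    refine ⟨g * simpleGen i, mul_mem hg (simpleGen_mem i), simpleGen i, ⟨i, rfl⟩, ?_, hi⟩
    rw [mul_assoc, simpleGen_mul_self, mul_one]

theorem length_mul_mul_eq_iff {x y z : Perm (Fin (2 * n))}
    (hx : x ∈ hyperoctahedralGroup (2 * n)) (hy : y ∈ hyperoctahedralGroup (2 * n))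
    (hz : z ∈ hyperoctahedralGroup (2 * n)) :
    length (x * y * z) = length x + length y + length z ↔
      inversions z ⊆ inversions (y * z) ∧ inversions (y * z) ⊆ inversions (x * y * z) := by
  rw [← inversionWeight_mul_mul_eq_iff stabilizerWeight_pos (stabilizerWeight_map hy)
    (stabilizerWeight_map hz)]
  have h_xyz := two_mul_length (mul_mem (mul_mem hx hy) hz)
  have h_x := two_mul_length hx
  have h_y := two_mul_length hy
  have h_z := two_mul_length hz
  omega

end Generators

section Square

variable {n : ℕ}

/-- The permutation `v_□`, reversing each of the two halves of `Fin (2 * n)`. -/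
def squarePerm (n : ℕ) : Perm (Fin (2 * n)) :=
  Function.Involutive.toPerm
    (fun i => ⟨if (i : ℕ) < n then n - 1 - i else 3 * n - 1 - i, by split_ifs <;> omega⟩)
    fun i => Fin.ext <| by dsimp only; split_ifs <;> omega

theorem val_squarePerm_apply (i : Fin (2 * n)) :
    (squarePerm n i : ℕ) = if (i : ℕ) < n then n - 1 - (i : ℕ) else 3 * n - 1 - (i : ℕ) :=
  rfl

theorem squarePerm_mem (n : ℕ) : squarePerm n ∈ hyperoctahedralGroup (2 * n) := by
  refine mem_hyperoctahedralGroup.2 fun i => Fin.ext ?_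
  simp only [Fin.val_rev, val_squarePerm_apply]
  split_ifs <;> omega

theorem squarePerm_lt_squarePerm_iff {a b : Fin (2 * n)} :
    squarePerm n a < squarePerm n b ↔
      ((a : ℕ) < n ∧ n ≤ b) ∨ (b < a ∧ ((a : ℕ) < n ↔ (b : ℕ) < n)) := by
  simp only [Fin.lt_def, val_squarePerm_apply]
  split_ifs <;> omega

theorem inversions_subset_squarePerm_mul_iff {r : Perm (Fin (2 * n))} :
    inversions r ⊆ inversions (squarePerm n * r) ↔
      ∀ i j, i < j → r j < r i → (r j : ℕ) < n ∧ n ≤ r i := by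
  simp only [Finset.subset_iff, Prod.forall, mem_inversions, Perm.mul_apply,
    squarePerm_lt_squarePerm_iff, and_imp]
  refine forall₄_congr fun i j hij h_lt => ?_
  have := h_lt.asymm
  tauto

theorem inversions_squarePerm_mul_subset_iff {r v : Perm (Fin (2 * n))}
    (hr : inversions r ⊆ inversions (squarePerm n * r)) :
    inversions (squarePerm n * r) ⊆ inversions v ↔
      ∀ i j, i < j → v i < v j → (r i : ℕ) < n ∧ n ≤ r j := by
  rw [inversions_subset_squarePerm_mul_iff] at hr
  have h_mem {i j : Fin (2 * n)} (hij : i < j) :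
      (i, j) ∈ inversions (squarePerm n * r) ↔ ¬((r i : ℕ) < n ∧ n ≤ r j) := by
    have := hr i j hij
    have := r.injective.ne hij.ne
    simp only [mem_inversions, Perm.mul_apply, squarePerm_lt_squarePerm_iff]
    grind
  constructor
  · intro h i j hij h_asc
    by_contra h_not
    exact (mem_inversions.1 (h ((h_mem hij).2 h_not))).2.asymm h_asc
  · rintro h ⟨i, j⟩ h_inv
    have hij : i < j := (mem_inversions.1 h_inv).1
    by_contra h_not
    exact (h_mem hij).1 h_inv (h i j hij (lt_of_notMem_inversions hij h_not))

end Square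

section Shuffle

theorem sort_notMem_mem_hyperoctahedralGroup {N : ℕ} {A : Set (Fin N)}
    (hA : ∀ i, Fin.rev i ∈ A ↔ i ∉ A) :
    Tuple.sort (fun i => i ∉ A) ∈ hyperoctahedralGroup N := by
  set σ := Tuple.sort (fun i => i ∉ A) with hσ
  obtain ⟨h_mono, h_stable⟩ := Tuple.eq_sort_iff.1 hσ
  have h_conj : Fin.revPerm * σ * Fin.revPerm = σ := by
    refine Tuple.eq_sort_iff.2 ⟨fun i j hij hi => ?_, fun i j hij h => ?_⟩
    · have h_rev : σ j.rev ∉ A → σ i.rev ∉ A := h_mono (Fin.rev_le_rev.2 hij)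
      simp only [Function.comp_apply, Perm.mul_apply, Fin.revPerm_apply, hA] at hi ⊢
      tauto
    · simp only [Perm.mul_apply, Fin.revPerm_apply, hA, not_not, eq_iff_iff] at h
      exact Fin.rev_lt_rev.2 (h_stable _ _ (Fin.rev_lt_rev.2 hij) (propext (not_congr h.symm)))
  rw [mem_hyperoctahedralGroup]
  intro i
  simpa using DFunLike.congr_fun h_conj.symm i.rev

variable {n : ℕ}

theorem exists_shuffle {A : Set (Fin (2 * n))} (hA : ∀ i, Fin.rev i ∈ A ↔ i ∉ A) :
    ∃ r ∈ hyperoctahedralGroup (2 * n), (∀ i, (r i : ℕ) < n ↔ i ∈ A) ∧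
      ∀ i j, i < j → r j < r i → j ∈ A ∧ i ∉ A := by
  have h_mem := sort_notMem_mem_hyperoctahedralGroup hA
  set σ := Tuple.sort (fun i => i ∉ A) with hσ
  obtain ⟨h_mono, h_stable⟩ := Tuple.eq_sort_iff.1 hσ
  have h_le {a b : Fin (2 * n)} (hab : a ≤ b) (hb : σ b ∈ A) : σ a ∈ A :=
    not_not.1 fun ha => h_mono hab ha hb
  have h_rev (a : Fin (2 * n)) : σ a.rev ∈ A ↔ σ a ∉ A := by
    rw [mem_hyperoctahedralGroup.1 h_mem, hA]
  have h_inv (a : Fin (2 * n)) : σ⁻¹ (σ a) = a := σ.symm_apply_apply a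
  refine ⟨σ⁻¹, inv_mem h_mem, fun i => ?_, fun i j hij h_lt => ?_⟩
  · obtain ⟨a, rfl⟩ := σ.surjective i
    rw [h_inv]
    have h_le_rev : (a : ℕ) < n → a ≤ a.rev := fun ha => by
      rw [Fin.le_def, Fin.val_rev]
      omega
    have h_rev_le : ¬(a : ℕ) < n → a.rev ≤ a := fun ha => by
      rw [Fin.le_def, Fin.val_rev]
      omega
    constructor
    · intro ha
      by_contra h_notMem
      exact h_notMem (h_le (h_le_rev ha) ((h_rev a).2 h_notMem))
    · intro h_mem
      by_contra ha
      exact (h_rev a).1 (h_le (h_rev_le ha) h_mem) h_mem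
  · obtain ⟨a, rfl⟩ := σ.surjective i
    obtain ⟨b, rfl⟩ := σ.surjective j
    rw [h_inv, h_inv] at h_lt
    have h_ne : ¬(σ b ∉ A ↔ σ a ∉ A) := fun h => (h_stable b a h_lt (propext h)).asymm hij
    have h_imp : σ a ∈ A → σ b ∈ A := h_le h_lt.le
    tauto

end Shuffle

section Avoidance

/-- `v` is 123-avoiding. -/
def Avoids123 {α : Type*} [LT α] (v : Perm α) : Prop :=
  ¬ ∃ i j k : α, i < j ∧ j < k ∧ v i < v j ∧ v j < v k

/-- The positions with a larger value somewhere to their right. -/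
def ascentBottoms {α : Type*} [LT α] (v : Perm α) : Set α :=
  {i | ∃ j, i < j ∧ v i < v j}

/-- The positions with a smaller value somewhere to their left. -/
def ascentTops {α : Type*} [LT α] (v : Perm α) : Set α :=
  {j | ∃ i, i < j ∧ v i < v j}

theorem avoids123_iff_disjoint {α : Type*} [LT α] {v : Perm α} :
    Avoids123 v ↔ Disjoint (ascentBottoms v) (ascentTops v) := by
  simp only [Avoids123, ascentBottoms, ascentTops, Set.disjoint_left, Set.mem_ofPred_eq]
  grind

theorem rev_mem_ascentBottoms {N : ℕ} {v : Perm (Fin N)} (hv : v ∈ hyperoctahedralGroup N)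
    {i : Fin N} : i.rev ∈ ascentBottoms v ↔ i ∈ ascentTops v := by
  refine Fin.revPerm.exists_congr_left.trans (exists_congr fun j => ?_)
  simp [mem_hyperoctahedralGroup.1 hv]

theorem avoids123_iff_exists_cut {n : ℕ} {v : Perm (Fin (2 * n))}
    (hv : v ∈ hyperoctahedralGroup (2 * n)) :
    Avoids123 v ↔ ∃ A : Set (Fin (2 * n)), (∀ i, Fin.rev i ∈ A ↔ i ∉ A) ∧
      ∀ i j, i < j → v i < v j → i ∈ A ∧ j ∉ A := by
  rw [avoids123_iff_disjoint, Set.disjoint_left]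
  constructor
  · intro h_disj
    refine ⟨ascentBottoms v ∪ {i | i ∉ ascentTops v ∧ (i : ℕ) < n}, fun i => ?_,
      fun i j hij h_asc => ?_⟩
    · have h_bottom : i.rev ∈ ascentBottoms v ↔ i ∈ ascentTops v := rev_mem_ascentBottoms hv
      have h_top : i.rev ∈ ascentTops v ↔ i ∈ ascentBottoms v := by
        rw [← rev_mem_ascentBottoms hv, Fin.rev_rev]
      have h_half : (i.rev : ℕ) < n ↔ ¬ (i : ℕ) < n := by
        rw [Fin.val_rev]
        omega
      have := @h_disj i
      simp only [Set.mem_union, Set.mem_ofPred_eq, h_bottom, h_top, h_half]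
      tauto
    · have h_top : j ∈ ascentTops v := ⟨i, hij, h_asc⟩
      exact ⟨Or.inl ⟨j, hij, h_asc⟩, fun h => h.elim (h_disj · h_top) (·.1 h_top)⟩
  · rintro ⟨A, -, h_cut⟩ j ⟨k, hjk, h_asc⟩ ⟨i, hij, h_asc'⟩
    exact (h_cut i j hij h_asc').2 (h_cut j k hjk h_asc).1

theorem exists_length_eq_add_iff_avoids123 {n : ℕ} {v : Perm (Fin (2 * n))}
    (hv : v ∈ hyperoctahedralGroup (2 * n)) :
    (∃ ul ur : Perm (Fin (2 * n)),
        ul ∈ hyperoctahedralGroup (2 * n) ∧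
        ur ∈ hyperoctahedralGroup (2 * n) ∧
        v = ul * squarePerm n * ur ∧
        length v = length ul + length (squarePerm n) + length ur) ↔
      Avoids123 v := by
  rw [avoids123_iff_exists_cut hv]
  constructor
  · rintro ⟨ul, ur, hl, hr, rfl, h_len⟩
    obtain ⟨h_right, h_left⟩ := (length_mul_mul_eq_iff hl (squarePerm_mem n) hr).1 h_len
    refine ⟨{i | (ur i : ℕ) < n}, fun i => ?_, ?_⟩
    · simp only [Set.mem_ofPred_eq, mem_hyperoctahedralGroup.1 hr, Fin.val_rev]
      omega
    · simpa using (inversions_squarePerm_mul_subset_iff h_right).1 h_left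
  · rintro ⟨A, hA, h_cut⟩
    obtain ⟨r, hr, h_half, h_shuffle⟩ := exists_shuffle hA
    have h_right : inversions r ⊆ inversions (squarePerm n * r) :=
      inversions_subset_squarePerm_mul_iff.2 <| by simpa only [← not_lt, h_half] using h_shuffle
    have h_left : inversions (squarePerm n * r) ⊆ inversions v :=
      (inversions_squarePerm_mul_subset_iff h_right).2 <| by
        simpa only [← not_lt, h_half] using h_cut
    have hl : v * r⁻¹ * (squarePerm n)⁻¹ ∈ hyperoctahedralGroup (2 * n) :=
      mul_mem (mul_mem hv (inv_mem hr)) (inv_mem (squarePerm_mem n))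
    have h_eq : v = v * r⁻¹ * (squarePerm n)⁻¹ * squarePerm n * r := by group
    have h_iff := length_mul_mul_eq_iff hl (squarePerm_mem n) hr
    rw [← h_eq] at h_iff
    exact ⟨_, r, hl, hr, h_eq, h_iff.2 ⟨h_right, h_left⟩⟩

end Avoidance

end TypeC

/-- For `v` in the type-C Weyl group
`C_n = {v ∈ S_{2n} : v(2n+1-i) = 2n+1-v(i)}`, with simple generators
`c 0 = s_n` and `c i = s_{n-i} s_{n+i}` (`1 ≤ i ≤ n-1`), and `ℓC` the word
length with respect to these generators, and `v_□` the square-word permutation: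
`v` admits a factorization `v = u_l · v_□ · u_r` with `u_l, u_r ∈ C_n` and
`ℓC v = ℓC u_l + ℓC v_□ + ℓC u_r` (i.e. `v ≥ v_□` in left-right weak order)
if and only if `v` is 123-avoiding as an element of `S_{2n}`. -/
theorem stmt16 (n : ℕ) (hn : 1 ≤ n)
    (c : ℕ → Equiv.Perm (Fin (2 * n)))
    (hc0 : c 0 = Equiv.swap ⟨n - 1, by omega⟩ ⟨n, by omega⟩)
    (hci : ∀ i (h1 : 1 ≤ i) (h2 : i < n),
      c i = Equiv.swap ⟨n - i - 1, by omega⟩ ⟨n - i, by omega⟩ *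
            Equiv.swap ⟨n + i - 1, by omega⟩ ⟨n + i, by omega⟩)
    (ℓC : Equiv.Perm (Fin (2 * n)) → ℕ)
    (hℓ : ∀ u, ℓC u = sInf {m | ∃ l : List (Equiv.Perm (Fin (2 * n))),
        l.length = m ∧ (∀ x ∈ l, ∃ i < n, x = c i) ∧ l.prod = u})
    (vsq : Equiv.Perm (Fin (2 * n)))
    (hvsq : ∀ i : Fin (2 * n), ((vsq i : ℕ)) =
        if (i : ℕ) < n then n - 1 - (i : ℕ) else 3 * n - 1 - (i : ℕ))
    (v : Equiv.Perm (Fin (2 * n)))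
    (hv : ∀ i, v (Fin.rev i) = Fin.rev (v i)) :
    (∃ ul ur : Equiv.Perm (Fin (2 * n)),
        (∀ i, ul (Fin.rev i) = Fin.rev (ul i)) ∧
        (∀ i, ur (Fin.rev i) = Fin.rev (ur i)) ∧
        v = ul * vsq * ur ∧
        ℓC v = ℓC ul + ℓC vsq + ℓC ur) ↔
      ¬ ∃ i j k : Fin (2 * n), i < j ∧ j < k ∧ v i < v j ∧ v j < v k := by
  have h_gen (i : Fin n) : c i = TypeC.simpleGen i := by
    rcases Nat.eq_zero_or_pos i with hi | hi
    · simp [TypeC.simpleGen, hi, hc0]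
    · rw [hci i hi i.isLt, TypeC.simpleGen, if_neg hi.ne']
  have h_range : {x | ∃ i < n, x = c i} = Set.range TypeC.simpleGen := by
    ext x
    simp [Fin.exists_iff, ← h_gen, eq_comm]
  obtain rfl : ℓC = TypeC.length := by
    ext u
    rw [hℓ, TypeC.length, ← h_range]
    rfl
  obtain rfl : vsq = TypeC.squarePerm n := Equiv.ext fun i => Fin.ext (hvsq i)
  simpa only [TypeC.Avoids123, TypeC.mem_hyperoctahedralGroup] using
    TypeC.exists_length_eq_add_iff_avoids123 (TypeC.mem_hyperoctahedralGroup.2 hv)
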